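/- Let A be a Noetherian ring, B = A[Y]/I a finitely presented A-algebra with Y = (Y_1,…,Y_n), and P a prime ideal of B. Then the localization B_P is essentially smooth over A (i.e., a localization of a smooth A-algebra at a prime ideal) if and only if P does not contain H_{B/A}. -/

import Mathlib

open MvPolynomial

universe u

/-- The ideal `Δ_f` generated by all `r × r` minors of the Jacobian matrix `(∂f_i/∂Y_j)`. -/
noncomputable def jacobiDelta {A : Type*} [CommRing A] {n r : ℕ}
    (f : Fin r → MvPolynomial (Fin n) A) : Ideal (MvPolynomial (Fin n) A) :=
  Ideal.span { m | ∃ c : Fin r → Fin n, Function.Injective c ∧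
    m = Matrix.det (Matrix.of fun i j : Fin r => MvPolynomial.pderiv (c j) (f i)) }

/-- The ideal `Σ_f ((f) : I)·Δ_f` of `A[Y]`, the sum being over all systems
`f = (f₁, …, f_r)` of polynomials from `I` with `r ≤ n`. -/
noncomputable def preHIdeal {A : Type*} [CommRing A] {n : ℕ}
    (I : Ideal (MvPolynomial (Fin n) A)) : Ideal (MvPolynomial (Fin n) A) :=
  ⨆ (r : ℕ) (_ : r ≤ n) (f : Fin r → MvPolynomial (Fin n) A) (_ : ∀ i, f i ∈ I),
    (Submodule.colon (Ideal.span (Set.range f)) I) * jacobiDelta f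

/-- The ideal `H_{B/A} ⊆ B` for `B = A[Y]/I`. -/
noncomputable def HIdeal {A : Type*} [CommRing A] {n : ℕ}
    (I : Ideal (MvPolynomial (Fin n) A)) : Ideal (MvPolynomial (Fin n) A ⧸ I) :=
  (Ideal.map (Ideal.Quotient.mk I) (preHIdeal I)).radical

/-!
Write `L = B_P = T / N`, where `T = A[Y]_p` for the preimage `p` of `P` and `N = I T`, and let
`k` be the residue field of `T`. Since `T` is formally smooth over `A`, the algebra `L` is
formally smooth iff `k ⊗ N → k ⊗ Ω[T⁄A] = kⁿ`, `1 ⊗ f ↦ 1 ⊗ df`, is injective. As `I` spans the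
finite-dimensional space `k ⊗ N`, this means that some `f₁, …, f_r ∈ I` span `k ⊗ N` and have
linearly independent images in `kⁿ`. By Nakayama the first condition says that the `f_i`
generate `N`, i.e. that `(f) : I ⊄ p`, and the second says that some maximal minor of their
Jacobian matrix is not in `p`, i.e. that `Δ_f ⊄ p`. Essential smoothness of `L` reduces to
formal smoothness because the smooth locus of `B` over `A` is open.
-/

universe v

open TensorProduct KaehlerDifferential

section LinearAlgebra

theorem injective_iff_exists_span_eq_top_linearIndependent_comp {K V W ι : Type*} [Field K]
    [AddCommGroup V] [Module K V] [Module.Finite K V] [AddCommGroup W] [Module K W]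
    (φ : V →ₗ[K] W) {v : ι → V} (hv : Submodule.span K (Set.range v) = ⊤) :
    Function.Injective φ ↔ ∃ (r : ℕ) (a : Fin r → ι),
      Submodule.span K (Set.range (v ∘ a)) = ⊤ ∧ LinearIndependent K (φ ∘ v ∘ a) := by
  constructor
  · intro hφ
    obtain ⟨b, hb, hspan, hli⟩ := Submodule.exists_fun_fin_finrank_span_eq K (Set.range v)
    choose a ha using hb
    obtain rfl : v ∘ a = b := funext ha
    exact ⟨_, a, hspan.trans hv, hli.map' φ (LinearMap.ker_eq_bot.mpr hφ)⟩
  · rintro ⟨r, a, hspan, hli⟩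
    rw [span_range_eq_top_iff_surjective_finsuppLinearCombination] at hspan
    refine Function.Injective.of_comp_right (g := Finsupp.linearCombination K (v ∘ a)) ?_ hspan
    rw [← LinearMap.coe_comp, ← Finsupp.linearCombination_linear_comp]
    exact hli

theorem linearIndependent_row_iff_exists_det_submatrix_ne_zero {K m n : Type*} [Field K]
    [Fintype m] [DecidableEq m] [Finite n] (M : Matrix m n K) :
    LinearIndependent K M.row ↔
      ∃ c : m → n, Function.Injective c ∧ (M.submatrix id c).det ≠ 0 := by
  cases nonempty_fintype n
  constructor
  · intro hrow
    obtain ⟨κ, a, ha, hspan, hli⟩ := exists_linearIndependent' K M.col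
    have hcol : Submodule.span K (Set.range M.col) = ⊤ :=
      Submodule.eq_top_of_finrank_eq <| by
        rw [← M.rank_eq_finrank_span_cols, hrow.rank_matrix, Module.finrank_fintype_fun_eq_card]
    let b := Module.Basis.mk hli (hspan.trans hcol).ge
    let e : m ≃ κ := (Pi.basisFun K m).indexEquiv b
    refine ⟨a ∘ e, ha.comp e.injective, IsUnit.ne_zero ?_⟩
    rw [← Matrix.isUnit_iff_isUnit_det, ← Matrix.linearIndependent_cols_iff_isUnit]
    exact hli.comp e e.injective
  · rintro ⟨c, -, hc⟩
    exact (Matrix.linearIndependent_rows_of_det_ne_zero hc).of_comp (LinearMap.funLeft K K c)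

end LinearAlgebra

section Localization

variable {R : Type*} [CommRing R]

theorem ideal_map_span_range {S ι : Type*} [CommRing S] (φ : R →+* S) (f : ι → R) :
    (Ideal.span (Set.range f)).map φ = Ideal.span (Set.range fun i => φ (f i)) := by
  rw [Ideal.map_span, ← Set.range_comp, Function.comp_def]

theorem map_le_map_iff_exists_mem_colon (M : Submonoid R) (S : Type*) [CommRing S] [Algebra R S]
    [IsLocalization M S] {I : Ideal R} (J : Ideal R) (hI : I.FG) :
    I.map (algebraMap R S) ≤ J.map (algebraMap R S) ↔ ∃ s ∈ M, s ∈ J.colon I := by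
  simp only [Ideal.map_le_iff_le_comap]
  constructor
  · intro h
    classical
    obtain ⟨t, rfl⟩ := hI
    choose! s hsM hs using fun p (hp : p ∈ t) =>
      (IsLocalization.algebraMap_mem_map_algebraMap_iff M S J p).mp (h (Ideal.subset_span hp))
    refine ⟨∏ p ∈ t, s p, M.prod_mem hsM, ?_⟩
    rw [Submodule.colon_span, Submodule.mem_colon]
    intro p hp
    rw [← Finset.prod_erase_mul t s hp, smul_eq_mul, mul_assoc]
    exact J.mul_mem_left _ (hs p hp)
  · rintro ⟨s, hsM, hs⟩ p hp
    exact (IsLocalization.algebraMap_mem_map_algebraMap_iff M S J p).mpr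
      ⟨s, hsM, Submodule.mem_colon.mp hs p hp⟩

theorem not_colon_le_iff_map_le_map (p : Ideal R) [p.IsPrime] (T : Type*) [CommRing T]
    [Algebra R T] [IsLocalization.AtPrime T p] {I : Ideal R} (J : Ideal R) (hI : I.FG) :
    ¬ J.colon I ≤ p ↔ I.map (algebraMap R T) ≤ J.map (algebraMap R T) := by
  rw [map_le_map_iff_exists_mem_colon p.primeCompl T J hI, SetLike.not_le_iff_exists]
  exact exists_congr fun _ => and_comm

theorem isLocalization_atPrime_comap_maximalIdeal {S L : Type*} [CommRing S] [CommRing L]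
    [Algebra R S] [Algebra S L] [Algebra R L] [IsScalarTower R S L] (M : Submonoid R)
    [IsLocalization M S] (P : Ideal R) [P.IsPrime] [IsLocalization.AtPrime L P] [IsLocalRing L]
    (hM : M ≤ P.primeCompl) :
    IsLocalization.AtPrime L ((IsLocalRing.maximalIdeal L).comap (algebraMap S L)) := by
  have hN := IsLocalization.isLocalization_of_submonoid_le S L M P.primeCompl hM
  refine IsLocalization.of_le (P.primeCompl.map (algebraMap R S)) _ ?_ ?_
  · intro y hy hy'
    exact hy' (IsLocalization.map_units L (⟨y, hy⟩ : P.primeCompl.map (algebraMap R S)))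
  · intro y hy
    exact IsLocalRing.notMem_maximalIdeal.mp hy

section Quotient

variable (M : Submonoid R) (S T L : Type*) [CommRing S] [CommRing T] [CommRing L] [Algebra R S]
  [Algebra R T] [IsLocalization M T] [Algebra S L] [Algebra R L] [IsScalarTower R S L]
  [IsLocalization (Algebra.algebraMapSubmonoid S M) L] [Algebra T L] [IsScalarTower R T L]

include M S

theorem algebraMap_localization_surjective (h : Function.Surjective (algebraMap R S)) :
    Function.Surjective (algebraMap T L) := by
  have : IsLocalization (M.map (algebraMap R S)) L :=
    ‹IsLocalization (Algebra.algebraMapSubmonoid S M) L›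
  rw [IsLocalization.algebraMap_eq_map_map_submonoid M S T L]
  exact IsLocalization.map_surjective_of_surjective M T L h

theorem ker_algebraMap_localization :
    RingHom.ker (algebraMap T L) = (RingHom.ker (algebraMap R S)).map (algebraMap R T) := by
  rw [IsLocalization.algebraMap_eq_map_map_submonoid M S T L]
  exact IsLocalization.ker_map (T := Algebra.algebraMapSubmonoid S M) L (algebraMap R S) rfl

end Quotient

end Localization

section LocalRing

theorem span_range_eq_top_iff_span_tmul_eq_top {T N ι : Type*} [CommRing T] [IsLocalRing T]
    [AddCommGroup N] [Module T N] [Module.Finite T N] (w : ι → N) :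
    Submodule.span T (Set.range w) = ⊤ ↔
      Submodule.span (IsLocalRing.ResidueField T)
        (Set.range fun i => (1 : IsLocalRing.ResidueField T) ⊗ₜ[T] w i) = ⊤ := by
  rw [← IsLocalRing.map_tensorProduct_mk_eq_top, Submodule.map_span,
    ← Submodule.restrictScalars_span T (IsLocalRing.ResidueField T) Ideal.Quotient.mk_surjective,
    Submodule.restrictScalars_eq_top_iff, ← Set.range_comp]
  rfl

theorem ideal_span_range_eq_iff_span_tmul_eq_top {T ι : Type*} [CommRing T] [IsLocalRing T]
    {N : Ideal T} (hN : N.FG) {g : ι → T} (hg : ∀ i, g i ∈ N) :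
    Ideal.span (Set.range g) = N ↔
      Submodule.span (IsLocalRing.ResidueField T)
        (Set.range fun i => (1 : IsLocalRing.ResidueField T) ⊗ₜ[T] (⟨g i, hg i⟩ : N)) = ⊤ := by
  have : Module.Finite T N := .of_fg hN
  rw [← span_range_eq_top_iff_span_tmul_eq_top]
  exact (Submodule.span_range_subtype_eq_top_iff N hg).symm

variable {A T L ι : Type*} [CommRing A] [CommRing T] [IsLocalRing T] [CommRing L] [Algebra A T]
  [Algebra T L] {g : ι → T}

theorem injective_cotangentComplexBaseChange_iff [Algebra L (IsLocalRing.ResidueField T)]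
    [IsScalarTower T L (IsLocalRing.ResidueField T)] (hfg : (RingHom.ker (algebraMap T L)).FG)
    (hg : Ideal.span (Set.range g) = RingHom.ker (algebraMap T L)) :
    Function.Injective (cotangentComplexBaseChange A L T (IsLocalRing.ResidueField T)) ↔
      ∃ (r : ℕ) (a : Fin r → ι), Ideal.span (Set.range (g ∘ a)) = RingHom.ker (algebraMap T L) ∧
        LinearIndependent (IsLocalRing.ResidueField T)
          fun i => (1 : IsLocalRing.ResidueField T) ⊗ₜ[T] D A T (g (a i)) := by
  have hmem (i : ι) : g i ∈ RingHom.ker (algebraMap T L) := hg ▸ Ideal.subset_span ⟨i, rfl⟩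
  have : Module.Finite T (RingHom.ker (algebraMap T L)) := .of_fg hfg
  have hD (i : ι) : cotangentComplexBaseChange A L T (IsLocalRing.ResidueField T)
      (1 ⊗ₜ ⟨g i, hmem i⟩) = 1 ⊗ₜ D A T (g i) :=
    (cotangentComplexBaseChange_tmul 1 _).trans (one_smul _ _)
  rw [injective_iff_exists_span_eq_top_linearIndependent_comp _
    ((ideal_span_range_eq_iff_span_tmul_eq_top hfg hmem).mp hg)]
  refine exists_congr fun r => exists_congr fun a => and_congr ?_ ?_
  · exact (ideal_span_range_eq_iff_span_tmul_eq_top hfg fun i => hmem (a i)).symm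
  · simp only [Function.comp_def, hD]

theorem formallySmooth_iff_exists_linearIndependent_tmul_D [Nontrivial L] [Algebra A L]
    [IsScalarTower A T L] [Algebra.FormallySmooth A T] [Module.Free T Ω[T⁄A]]
    [Module.Finite T Ω[T⁄A]] (hsurj : Function.Surjective (algebraMap T L))
    (hfg : (RingHom.ker (algebraMap T L)).FG)
    (hg : Ideal.span (Set.range g) = RingHom.ker (algebraMap T L)) :
    Algebra.FormallySmooth A L ↔ ∃ (r : ℕ) (a : Fin r → ι),
      Ideal.span (Set.range (g ∘ a)) = RingHom.ker (algebraMap T L) ∧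
      LinearIndependent (IsLocalRing.ResidueField T)
        fun i => (1 : IsLocalRing.ResidueField T) ⊗ₜ[T] D A T (g (a i)) := by
  let K := IsLocalRing.ResidueField T
  have hL : IsLocalRing L := .of_surjective' (algebraMap T L) hsurj
  have hlocal : IsLocalHom (algebraMap T L) := .of_surjective _ hsurj
  have hker : RingHom.ker (algebraMap T L) ≤ RingHom.ker (algebraMap T K) := by
    rw [IsLocalRing.ResidueField.algebraMap_eq, IsLocalRing.ker_residue]
    exact IsLocalRing.le_maximalIdeal (RingHom.ker_ne_top _)
  let : Algebra L K :=
    (RingHom.liftOfSurjective (algebraMap T L) hsurj ⟨algebraMap T K, hker⟩).toAlgebra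
  have : IsScalarTower T L K := .of_algebraMap_eq fun t =>
    (RingHom.liftOfRightInverse_comp_apply _ _ (Function.rightInverse_surjInv hsurj)
      ⟨algebraMap T K, hker⟩ t).symm
  have hmax : IsLocalRing.maximalIdeal L ≤ RingHom.ker (algebraMap L K) := by
    intro x hx
    obtain ⟨t, rfl⟩ := hsurj x
    rw [RingHom.mem_ker, ← IsScalarTower.algebraMap_apply, IsLocalRing.ResidueField.algebraMap_eq,
      IsLocalRing.residue_eq_zero_iff, ← IsLocalRing.maximalIdeal_comap (algebraMap T L)]
    exact hx
  rw [Algebra.FormallySmooth.iff_injective_cotangentComplexBaseChange T K hsurj hfg hmax]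
  exact injective_cotangentComplexBaseChange_iff hfg hg

end LocalRing

section Jacobian

variable {A : Type*} [CommRing A]

/-- The Jacobian matrix `(∂f_i/∂Y_j)` of a family of polynomials; the generators of `jacobiDelta f`
are its minors on the columns selected by an injective `c`, i.e. `(jacobianMatrix f).submatrix id c`
up to unfolding. -/
noncomputable def jacobianMatrix {ι σ : Type*} (f : ι → MvPolynomial σ A) :
    Matrix ι σ (MvPolynomial σ A) :=
  Matrix.of fun i j => pderiv j (f i)

theorem not_jacobiDelta_le_iff {n r : ℕ} (f : Fin r → MvPolynomial (Fin n) A)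
    (p : Ideal (MvPolynomial (Fin n) A)) :
    ¬ jacobiDelta f ≤ p ↔ ∃ c : Fin r → Fin n, Function.Injective c ∧
      ((jacobianMatrix f).submatrix id c).det ∉ p := by
  rw [jacobiDelta, Ideal.span_le, Set.not_subset]
  constructor
  · rintro ⟨_, ⟨c, hc, rfl⟩, hdet⟩
    exact ⟨c, hc, hdet⟩
  · rintro ⟨c, hc, hdet⟩
    exact ⟨_, ⟨c, hc, rfl⟩, hdet⟩

variable {σ : Type*} (M : Submonoid (MvPolynomial σ A)) (T : Type*) [CommRing T]
  [Algebra (MvPolynomial σ A) T] [IsLocalization M T] [Algebra A T]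
  [IsScalarTower A (MvPolynomial σ A) T]

/-- The basis `dY_j` of the Kähler differentials of a localization `T` of `A[Y]`. -/
noncomputable def localizationKaehlerBasis : Module.Basis σ T Ω[T⁄A] :=
  (mvPolynomialBasis A σ).ofIsLocalizedModule T M
    (KaehlerDifferential.map A A (MvPolynomial σ A) T)

theorem localizationKaehlerBasis_repr_D (f : MvPolynomial σ A) (j : σ) :
    (localizationKaehlerBasis M T).repr (D A T (algebraMap _ T f)) j =
      algebraMap _ T (pderiv j f) := by
  rw [localizationKaehlerBasis, ← KaehlerDifferential.map_D A A (MvPolynomial σ A) T,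
    Module.Basis.ofIsLocalizedModule_repr_apply, mvPolynomialBasis_repr_apply]

include M in
theorem linearIndependent_tmul_D_iff_row_jacobianMatrix [Finite σ] (K : Type*) [Field K]
    [Algebra T K] [Algebra (MvPolynomial σ A) K] [IsScalarTower (MvPolynomial σ A) T K] {ι : Type*}
    (f : ι → MvPolynomial σ A) :
    LinearIndependent K (fun i => (1 : K) ⊗ₜ[T] D A T (algebraMap _ T (f i))) ↔
      LinearIndependent K ((jacobianMatrix f).map (algebraMap _ K)).row := by
  let b := (localizationKaehlerBasis M T).baseChange K
  rw [← b.equivFun.toLinearMap.linearIndependent_iff b.equivFun.ker]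
  congr! 1
  ext i j
  simp [b, localizationKaehlerBasis_repr_D, jacobianMatrix, Algebra.smul_def,
    ← IsScalarTower.algebraMap_apply]

theorem linearIndependent_tmul_D_iff_not_jacobiDelta_le {n r : ℕ}
    (f : Fin r → MvPolynomial (Fin n) A) (p : Ideal (MvPolynomial (Fin n) A)) [p.IsPrime]
    (T : Type*) [CommRing T] [IsLocalRing T] [Algebra (MvPolynomial (Fin n) A) T]
    [IsLocalization.AtPrime T p] [Algebra A T] [IsScalarTower A (MvPolynomial (Fin n) A) T] :
    LinearIndependent (IsLocalRing.ResidueField T)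
        (fun i => (1 : IsLocalRing.ResidueField T) ⊗ₜ[T] D A T (algebraMap _ T (f i))) ↔
      ¬ jacobiDelta f ≤ p := by
  have hres (x : MvPolynomial (Fin n) A) :
      algebraMap _ (IsLocalRing.ResidueField T) x = 0 ↔ x ∈ p := by
    rw [← IsLocalization.AtPrime.to_map_mem_maximal_iff T p x,
      ← IsLocalRing.residue_eq_zero_iff]
    rfl
  rw [linearIndependent_tmul_D_iff_row_jacobianMatrix p.primeCompl,
    linearIndependent_row_iff_exists_det_submatrix_ne_zero, not_jacobiDelta_le_iff]
  refine exists_congr fun c => and_congr_right fun _ => ?_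
  rw [Matrix.submatrix_map, ← RingHom.mapMatrix_apply, ← RingHom.map_det, Ne, hres]

end Jacobian

section HIdeal

variable {A : Type*} [CommRing A] {n : ℕ} {I : Ideal (MvPolynomial (Fin n) A)}

theorem formallySmooth_iff_exists_not_jacobiDelta_le (hI : I.FG)
    (p : Ideal (MvPolynomial (Fin n) A)) [p.IsPrime] (T L : Type*) [CommRing T]
    [Algebra (MvPolynomial (Fin n) A) T] [IsLocalization.AtPrime T p] [Algebra A T]
    [IsScalarTower A (MvPolynomial (Fin n) A) T] [CommRing L] [Nontrivial L] [Algebra A L]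
    [Algebra T L] [IsScalarTower A T L] (hsurj : Function.Surjective (algebraMap T L))
    (hker : RingHom.ker (algebraMap T L) = I.map (algebraMap _ T)) :
    Algebra.FormallySmooth A L ↔ ∃ (r : ℕ) (f : Fin r → I),
      ¬ (Ideal.span (Set.range fun i => (f i : MvPolynomial (Fin n) A))).colon I ≤ p ∧
      ¬ jacobiDelta (fun i => (f i : MvPolynomial (Fin n) A)) ≤ p := by
  have : IsLocalRing T := IsLocalization.AtPrime.isLocalRing T p
  have : Algebra.FormallySmooth (MvPolynomial (Fin n) A) T := .of_isLocalization p.primeCompl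
  have : Algebra.FormallySmooth A T := .comp A (MvPolynomial (Fin n) A) T
  let b := localizationKaehlerBasis p.primeCompl T
  have : Module.Free T Ω[T⁄A] := .of_basis b
  have : Module.Finite T Ω[T⁄A] := .of_basis b
  have hgen : Ideal.span (Set.range fun f : I => algebraMap (MvPolynomial (Fin n) A) T f) =
      RingHom.ker (algebraMap T L) := by
    rw [hker, ← ideal_map_span_range, Subtype.range_coe, Ideal.span_eq]
  rw [formallySmooth_iff_exists_linearIndependent_tmul_D hsurj (hker ▸ hI.map _) hgen]
  refine exists_congr fun r => exists_congr fun f => and_congr ?_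
    (linearIndependent_tmul_D_iff_not_jacobiDelta_le (fun i => (f i : MvPolynomial (Fin n) A)) p T)
  have hle : Ideal.span (Set.range fun i => algebraMap (MvPolynomial (Fin n) A) T (f i)) ≤
      I.map (algebraMap _ T) :=
    Ideal.span_le.mpr (Set.range_subset_iff.mpr fun i => Ideal.mem_map_of_mem _ (f i).2)
  rw [not_colon_le_iff_map_le_map p T _ hI, hker, ideal_map_span_range]
  exact ⟨Eq.ge, hle.antisymm⟩

variable (P : Ideal (MvPolynomial (Fin n) A ⧸ I)) [P.IsPrime]

theorem not_HIdeal_le_iff :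
    ¬ HIdeal I ≤ P ↔ ∃ (r : ℕ) (f : Fin r → I),
      ¬ (Ideal.span (Set.range fun i => (f i : MvPolynomial (Fin n) A))).colon I ≤
        P.comap (Ideal.Quotient.mk I) ∧
      ¬ jacobiDelta (fun i => (f i : MvPolynomial (Fin n) A)) ≤ P.comap (Ideal.Quotient.mk I) := by
  have hp : (P.comap (Ideal.Quotient.mk I)).IsPrime := .comap _
  rw [HIdeal, Ideal.IsPrime.radical_le_iff ‹_›, Ideal.map_le_iff_le_comap, preHIdeal]
  simp only [iSup_le_iff, not_forall, hp.mul_le, not_or, exists_prop]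
  refine exists_congr fun r => ⟨?_, ?_⟩
  · rintro ⟨-, f, hf, h⟩
    exact ⟨fun i => ⟨f i, hf i⟩, h⟩
  · rintro ⟨f, h⟩
    obtain ⟨c, hc, -⟩ := (not_jacobiDelta_le_iff _ _).mp h.2
    have hrn : r ≤ n := by simpa using Fintype.card_le_of_injective c hc
    exact ⟨hrn, fun i => f i, fun i => (f i).2, h⟩

theorem formallySmooth_iff_not_HIdeal_le (hI : I.FG) (L : Type*) [CommRing L]
    [Algebra (MvPolynomial (Fin n) A ⧸ I) L] [IsLocalization.AtPrime L P] [Algebra A L]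
    [IsScalarTower A (MvPolynomial (Fin n) A ⧸ I) L] :
    Algebra.FormallySmooth A L ↔ ¬ HIdeal I ≤ P := by
  let R := MvPolynomial (Fin n) A
  let p := P.comap (Ideal.Quotient.mk I)
  let T := Localization.AtPrime p
  let : Algebra R L := Algebra.compHom L (Ideal.Quotient.mk I)
  have : IsScalarTower R (R ⧸ I) L :=
    .of_algebraMap_eq (R := R) (S := R ⧸ I) (A := L) fun _ => rfl
  have : IsScalarTower A R L := .to₁₂₄ A R (R ⧸ I) L
  have : IsLocalization (Algebra.algebraMapSubmonoid (R ⧸ I) p.primeCompl) L := by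
    have hM : Algebra.algebraMapSubmonoid (R ⧸ I) p.primeCompl = P.primeCompl :=
      P.map_primeCompl_comap_of_surjective _ Ideal.Quotient.mk_surjective
    rwa [hM]
  let : Algebra T L := localizationAlgebra p.primeCompl (R ⧸ I)
  have : IsScalarTower R T L := isScalarTower_localizationAlgebra p.primeCompl (R ⧸ I)
  have : IsScalarTower A T L := .to₁₃₄ A R T L
  have : Nontrivial L := (IsLocalization.AtPrime.isLocalRing L P).toNontrivial
  rw [not_HIdeal_le_iff]
  refine formallySmooth_iff_exists_not_jacobiDelta_le hI p T L
    (algebraMap_localization_surjective p.primeCompl (R ⧸ I) T L Ideal.Quotient.mk_surjective) ?_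
  rw [ker_algebraMap_localization p.primeCompl (R ⧸ I) T L, Ideal.Quotient.algebraMap_eq,
    Ideal.mk_ker]

end HIdeal

section EssentiallySmooth

/-- An `A`-algebra `L` is essentially smooth if it is the localization of a smooth `A`-algebra `C`
at a prime `Q`. The structure map `C → L` is part of the data, so being a localization is stated for
the `C`-algebra structure it induces. -/
def IsEssentiallySmooth (A : Type u) (L : Type v) [CommRing A] [CommRing L] [Algebra A L] : Prop :=
  ∃ (C : Type u) (_ : CommRing C) (_ : Algebra A C), Algebra.Smooth A C ∧
    ∃ (Q : Ideal C) (_ : Q.IsPrime) (ψ : C →ₐ[A] L),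
      @IsLocalization C _ Q.primeCompl L _ ψ.toRingHom.toAlgebra

variable {A : Type u} {L : Type v} [CommRing A] [CommRing L] [Algebra A L]

theorem IsEssentiallySmooth.of_isLocalization_atPrime (C : Type u) [CommRing C] [Algebra A C]
    [Algebra.Smooth A C] [Algebra C L] [IsScalarTower A C L] (Q : Ideal C) [Q.IsPrime]
    [IsLocalization.AtPrime L Q] : IsEssentiallySmooth A L := by
  refine ⟨C, ‹_›, ‹_›, ‹_›, Q, ‹_›, IsScalarTower.toAlgHom A C L, ?_⟩
  convert ‹IsLocalization.AtPrime L Q›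
  exact Algebra.algebra_ext _ _ fun _ => rfl

theorem IsEssentiallySmooth.formallySmooth (h : IsEssentiallySmooth A L) :
    Algebra.FormallySmooth A L := by
  obtain ⟨C, _, _, hC, Q, _, ψ, hL⟩ := h
  let : Algebra C L := ψ.toRingHom.toAlgebra
  have : IsScalarTower A C L := .of_algebraMap_eq fun a => (ψ.commutes a).symm
  have : Algebra.FormallySmooth C L := .of_isLocalization Q.primeCompl
  exact .comp A C L

theorem isEssentiallySmooth_iff_formallySmooth (B : Type u) [CommRing B] [Algebra A B]
    [Algebra.FinitePresentation A B] [Algebra B L] [IsScalarTower A B L] (P : Ideal B) [P.IsPrime]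
    [IsLocalization.AtPrime L P] : IsEssentiallySmooth A L ↔ Algebra.FormallySmooth A L := by
  refine ⟨IsEssentiallySmooth.formallySmooth, fun _ => ?_⟩
  have : IsLocalRing L := IsLocalization.AtPrime.isLocalRing L P
  let e := IsLocalization.algEquiv P.primeCompl L (Localization.AtPrime P)
  have : Algebra.IsSmoothAt A P := Algebra.FormallySmooth.of_equiv (e.restrictScalars A)
  obtain ⟨f, hfP, hf⟩ := Algebra.IsSmoothAt.exists_notMem_smooth (R := A) P
  have hle : Submonoid.powers f ≤ P.primeCompl := Submonoid.powers_le.mpr hfP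
  let : Algebra (Localization.Away f) L := IsLocalization.localizationAlgebraOfSubmonoidLe
    (Localization.Away f) L (Submonoid.powers f) P.primeCompl hle
  have : IsScalarTower B (Localization.Away f) L :=
    IsLocalization.localization_isScalarTower_of_submonoid_le _ _ _ _ hle
  have : IsScalarTower A (Localization.Away f) L := .to₁₃₄ A B (Localization.Away f) L
  have := isLocalization_atPrime_comap_maximalIdeal (S := Localization.Away f) (L := L) _ P hle
  exact .of_isLocalization_atPrime (Localization.Away f)
    ((IsLocalRing.maximalIdeal L).comap (algebraMap (Localization.Away f) L))

end EssentiallySmooth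

theorem essentiallySmooth_iff_not_HIdeal_le_general {A : Type u} [CommRing A] {n : ℕ}
    {I : Ideal (MvPolynomial (Fin n) A)} (hI : I.FG) (P : Ideal (MvPolynomial (Fin n) A ⧸ I))
    [P.IsPrime] (L : Type v) [CommRing L] [Algebra (MvPolynomial (Fin n) A ⧸ I) L]
    [IsLocalization.AtPrime L P] [Algebra A L]
    [IsScalarTower A (MvPolynomial (Fin n) A ⧸ I) L] :
    IsEssentiallySmooth A L ↔ ¬ HIdeal I ≤ P := by
  have : Algebra.FinitePresentation A (MvPolynomial (Fin n) A ⧸ I) := .quotient hI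
  rw [isEssentiallySmooth_iff_formallySmooth (MvPolynomial (Fin n) A ⧸ I) P,
    formallySmooth_iff_not_HIdeal_le P hI]

/-- **Jacobian criterion for smoothness.**  Let `A` be a Noetherian ring, `B = A[Y]/I` a
finitely presented `A`-algebra, `P` a prime of `B`, and `L` (a realization of) the
localization `B_P`.  Then `B_P` is essentially smooth over `A` — i.e. a localization of
a smooth `A`-algebra at a prime — if and only if `P` does not contain `H_{B/A}`. -/
theorem essentiallySmooth_iff_not_HIdeal_le {A : Type u} [CommRing A] [IsNoetherianRing A]
    {n : ℕ} (I : Ideal (MvPolynomial (Fin n) A))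
    (P : Ideal (MvPolynomial (Fin n) A ⧸ I)) (hP : P.IsPrime)
    (L : Type u) [CommRing L] [Algebra (MvPolynomial (Fin n) A ⧸ I) L]
    [IsLocalization.AtPrime L P] [Algebra A L]
    [IsScalarTower A (MvPolynomial (Fin n) A ⧸ I) L] :
    (∃ (C : Type u) (_ : CommRing C) (_ : Algebra A C), Algebra.Smooth A C ∧
      ∃ (Q : Ideal C) (_ : Q.IsPrime) (ψ : C →ₐ[A] L),
        @IsLocalization C _ Q.primeCompl L _ ψ.toRingHom.toAlgebra) ↔
      ¬ HIdeal I ≤ P := by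
  exact essentiallySmooth_iff_not_HIdeal_le_general (IsNoetherian.noetherian I) P L
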